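/- arXiv:1609.02867 — 2 statements merged into one kernel-verified Lean document; each statement's English description precedes it below -/
import Mathlib

section
/- Let μ, ν be finite Borel measures on ℝ with finite first moments such that μ ≤_pcd ν. Then the set T = {θ : θ a finite Borel measure on ℝ with finite first moment, μ ≤_cd θ and θ(A) ≤ ν(A) for all Borel A} is nonempty and contains a unique element θ* such that θ* ≤_cd θ for every θ ∈ T. (The measure θ* is called the shadow of μ in ν.) -/
/-!
The order `μ ≤_cd θ` means that the masses agree and `put μ ≤ put θ`, where
`put μ t = ∫ (t - s)⁺ dμ(s)` (`cdOrder_of_put_le`): up to a constant, a truncated convex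
nonincreasing function is a mixture of the payoffs `s ↦ (t - s)⁺`. A measure is determined by its
put function (`measure_eq_of_lintegral_eq`), and every convex function vanishing at `-∞` is a put
function (`lintegral_rightDerivStieltjes`).

Let `c` be the largest convex minorant of `put ν - put μ`, which is nonnegative because
`μ ≤_pcd ν`. The function `put ν - c` is convex (`convexOn_sub_convexEnvelope`), so `put ν - c` and
`c` are put functions of measures `θs` and `ρ` with `θs + ρ = ν`, whence `θs ≤ ν`. Comparing slopes at
`+∞` shows that `θs` has the mass of `μ` (`mass_eq_of_put_eq`), and `c ≤ put ν - put μ` gives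
`put μ ≤ put θs`; thus `μ ≤_cd θs`. If also `μ ≤_cd θ ≤ ν`, then `put ν - put θ = put (ν - θ)` is a
convex minorant of `put ν - put μ`, hence at most `c`, so `put θs ≤ put θ`. Uniqueness is
antisymmetry of `≤_cd`.
-/

open MeasureTheory Set
open scoped ENNReal

noncomputable section

/-- A finite Borel measure on ℝ with finite first moment. -/
def FiniteFirstMoment (μ : Measure ℝ) : Prop :=
  IsFiniteMeasure μ ∧ Integrable (fun x : ℝ => x) μ

/-- Linear growth of a real function. -/
def LinearGrowth (φ : ℝ → ℝ) : Prop :=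
  ∃ C : ℝ, ∀ x : ℝ, |φ x| ≤ C * (1 + |x|)

/-- Convex-decreasing (second stochastic) order `μ ≤_cd ν`. -/
def CDOrder (μ ν : Measure ℝ) : Prop :=
  ∀ φ : ℝ → ℝ, ConvexOn ℝ Set.univ φ → Antitone φ → LinearGrowth φ →
    ∫ x, φ x ∂μ ≤ ∫ x, φ x ∂ν

/-- Positive-convex-decreasing order `μ ≤_pcd ν`. -/
def PCDOrder (μ ν : Measure ℝ) : Prop :=
  ∀ φ : ℝ → ℝ, ConvexOn ℝ Set.univ φ → Antitone φ → (∀ x : ℝ, 0 ≤ φ x) →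
    LinearGrowth φ → ∫ x, φ x ∂μ ≤ ∫ x, φ x ∂ν

/-- Convex order `μ ≤_c ν`. -/
def COrder (μ ν : Measure ℝ) : Prop :=
  ∀ φ : ℝ → ℝ, ConvexOn ℝ Set.univ φ → LinearGrowth φ →
    ∫ x, φ x ∂μ ≤ ∫ x, φ x ∂ν

/-- `P` is a coupling of `μ` and `ν`. -/
def IsCoupling (P : Measure (ℝ × ℝ)) (μ ν : Measure ℝ) : Prop :=
  P.map Prod.fst = μ ∧ P.map Prod.snd = ν

/-- The supermartingale property of a measure on `ℝ × ℝ`. -/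
def SupermartingaleProperty (P : Measure (ℝ × ℝ)) : Prop :=
  ∀ A : Set ℝ, MeasurableSet A →
    ∫ p in A ×ˢ (Set.univ : Set ℝ), p.2 ∂P ≤ ∫ p in A ×ˢ (Set.univ : Set ℝ), p.1 ∂P

/-- `P ∈ S(μ,ν)`: supermartingale coupling. -/
def IsSupermartingaleCoupling (P : Measure (ℝ × ℝ)) (μ ν : Measure ℝ) : Prop :=
  IsCoupling P μ ν ∧ SupermartingaleProperty P

/-- `P|_{M×ℝ}` is a martingale. -/
def MartingaleOn (P : Measure (ℝ × ℝ)) (M : Set ℝ) : Prop :=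
  ∀ A : Set ℝ, MeasurableSet A → A ⊆ M →
    ∫ p in A ×ˢ (Set.univ : Set ℝ), p.2 ∂P = ∫ p in A ×ˢ (Set.univ : Set ℝ), p.1 ∂P

/-- `P ∈ M(μ,ν)`: martingale coupling. -/
def IsMartingaleCoupling (P : Measure (ℝ × ℝ)) (μ ν : Measure ℝ) : Prop :=
  IsCoupling P μ ν ∧ MartingaleOn P Set.univ

/-- `θ` is the shadow `S^ν(μ)` of `μ` in `ν`. -/
def IsShadow (μ ν θ : Measure ℝ) : Prop :=
  FiniteFirstMoment θ ∧ CDOrder μ θ ∧ θ ≤ ν ∧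
  ∀ θ' : Measure ℝ, FiniteFirstMoment θ' → CDOrder μ θ' → θ' ≤ ν → CDOrder θ θ'

/-- `P` is the Increasing Supermartingale Transport from `μ` to `ν`. -/
def IsIncreasingSMT (μ ν : Measure ℝ) (P : Measure (ℝ × ℝ)) : Prop :=
  IsSupermartingaleCoupling P μ ν ∧
  ∀ x : ℝ, ∃ θ : Measure ℝ, IsShadow (μ.restrict (Set.Iic x)) ν θ ∧
    ∀ A : Set ℝ, MeasurableSet A → P (Set.Iic x ×ˢ A) = θ A

/-- `P` is the Decreasing Supermartingale Transport from `μ` to `ν`. -/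
def IsDecreasingSMT (μ ν : Measure ℝ) (P : Measure (ℝ × ℝ)) : Prop :=
  IsSupermartingaleCoupling P μ ν ∧
  ∀ x : ℝ, ∃ θ : Measure ℝ, IsShadow (μ.restrict (Set.Ici x)) ν θ ∧
    ∀ A : Set ℝ, MeasurableSet A → P (Set.Ici x ×ˢ A) = θ A

/-- Relaxed supermartingale Spence–Mirrlees property. -/
def RelaxedSupermartingaleSM (f : ℝ × ℝ → ℝ) : Prop :=
  ∀ x₁ x₂ : ℝ, x₁ < x₂ →
    Antitone (fun y : ℝ => f (x₂, y) - f (x₁, y)) ∧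
    ConvexOn ℝ Set.univ (fun y : ℝ => f (x₂, y) - f (x₁, y))

/-- (Strict) supermartingale Spence–Mirrlees property. -/
def SupermartingaleSM (f : ℝ × ℝ → ℝ) : Prop :=
  ∀ x₁ x₂ : ℝ, x₁ < x₂ →
    StrictAnti (fun y : ℝ => f (x₂, y) - f (x₁, y)) ∧
    StrictConvexOn ℝ Set.univ (fun y : ℝ => f (x₂, y) - f (x₁, y))

/-- `f⁺` is `S(μ,ν)`-uniformly integrable. -/
def PosPartUnifInt (μ ν : Measure ℝ) (f : ℝ × ℝ → ℝ) : Prop :=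
  ∀ ε : ℝ, 0 < ε → ∃ N : ℝ, ∀ P : Measure (ℝ × ℝ),
    IsSupermartingaleCoupling P μ ν →
      ∫ p in {p : ℝ × ℝ | N < max (f p) 0}, max (f p) 0 ∂P ≤ ε

/-- First-order left monotonicity of `(Γ, M)`. -/
def FirstOrderLeftMonotone (Γ : Set (ℝ × ℝ)) (M : Set ℝ) : Prop :=
  ∀ x₁ y₁ x₂ y₂ : ℝ, (x₁, y₁) ∈ Γ → (x₂, y₂) ∈ Γ → x₁ < x₂ → x₂ ∉ M → y₁ ≤ y₂

/-- First-order right monotonicity of `(Γ, M)`. -/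
def FirstOrderRightMonotone (Γ : Set (ℝ × ℝ)) (M : Set ℝ) : Prop :=
  ∀ x₁ y₁ x₂ y₂ : ℝ, (x₁, y₁) ∈ Γ → (x₂, y₂) ∈ Γ → x₁ < x₂ → x₁ ∉ M → y₂ ≤ y₁

/-- Second-order left monotonicity of `Γ`. -/
def SecondOrderLeftMonotone (Γ : Set (ℝ × ℝ)) : Prop :=
  ∀ x y₁ y₂ x' y' : ℝ, (x, y₁) ∈ Γ → (x, y₂) ∈ Γ → (x', y') ∈ Γ →
    y₁ < y₂ → x < x' → y' ∉ Set.Ioo y₁ y₂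

/-- Second-order right monotonicity of `Γ`. -/
def SecondOrderRightMonotone (Γ : Set (ℝ × ℝ)) : Prop :=
  ∀ x y₁ y₂ x' y' : ℝ, (x, y₁) ∈ Γ → (x, y₂) ∈ Γ → (x', y') ∈ Γ →
    y₁ < y₂ → x' < x → y' ∉ Set.Ioo y₁ y₂

/-- Nondegeneracy of `(Γ, M)`. -/
def Nondegenerate (Γ : Set (ℝ × ℝ)) (M : Set ℝ) : Prop :=
  (∀ x y : ℝ, (x, y) ∈ Γ → x < y → ∃ y' : ℝ, y' < x ∧ (x, y') ∈ Γ) ∧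
  (∀ x y : ℝ, x ∈ M → (x, y) ∈ Γ → y < x → ∃ y' : ℝ, x < y' ∧ (x, y') ∈ Γ)

/-- The put function `p_μ`. -/
def put (μ : Measure ℝ) (t : ℝ) : ℝ := ∫ s, max (t - s) 0 ∂μ

/-- `x` is a barrier for the supermartingale transports from `μ` to `ν`. -/
def IsBarrier (μ ν : Measure ℝ) (x : ℝ) : Prop :=
  ∀ P : Measure (ℝ × ℝ), IsSupermartingaleCoupling P μ ν →
    P {p : ℝ × ℝ | p.1 ≤ x ∧ x < p.2} = 0 ∧ P {p : ℝ × ℝ | x ≤ p.1 ∧ p.2 < x} = 0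

/-- Barycenter of a finite measure (with `bary 0 = 0`). -/
def bary (θ : Measure ℝ) : ℝ := (∫ t, t ∂θ) / (θ Set.univ).toReal

open Filter Topology

/-! ### Convex functions on the line as put functions -/

/-- The right derivative of a convex function is a subgradient. -/
lemma ConvexOn.add_rightDeriv_mul_le {f : ℝ → ℝ} (hf : ConvexOn ℝ univ f) (t s : ℝ) :
    f t + derivWithin f (Ioi t) t * (s - t) ≤ f s := by
  rcases lt_trichotomy s t with h | h | h
  · have h1 := hf.slope_le_leftDeriv_of_mem_interior (x := s) (y := t) (mem_univ _) (by simp) h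
    have h2 := hf.leftDeriv_le_rightDeriv_of_mem_interior (x := t) (by simp)
    have h3 := h1.trans h2
    rw [slope_def_field, div_le_iff₀ (by linarith)] at h3
    linarith
  · subst h; simp
  · have h1 := hf.rightDeriv_le_slope_of_mem_interior (x := t) (y := s) (by simp) (mem_univ _) h
    rw [slope_def_field, le_div_iff₀ (by linarith)] at h1
    linarith

lemma ConvexOn.monotone_rightDeriv_univ {f : ℝ → ℝ} (hf : ConvexOn ℝ univ f) :
    Monotone (fun x => derivWithin f (Ioi x) x) := by
  have := hf.monotoneOn_rightDeriv
  rwa [interior_univ, monotoneOn_univ] at this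

lemma ConvexOn.continuous_univ {f : ℝ → ℝ} (hf : ConvexOn ℝ univ f) : Continuous f :=
  continuousOn_univ.1 (hf.continuousOn isOpen_univ)

lemma ConvexOn.rightDeriv_continuousWithinAt {f : ℝ → ℝ} (hf : ConvexOn ℝ univ f) (x : ℝ) :
    ContinuousWithinAt (fun x => derivWithin f (Ioi x) x) (Ici x) x := by
  refine tendsto_order.2 ⟨fun a ha => ?_, fun b hb => ?_⟩
  · filter_upwards [self_mem_nhdsWithin] with y hy
    exact ha.trans_le (hf.monotone_rightDeriv_univ hy)
  · have h1 : Tendsto (slope f x) (𝓝[>] x) (𝓝 (derivWithin f (Ioi x) x)) := by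
      have := hf.hasDerivWithinAt_rightDeriv_of_mem_interior (x := x) (by simp)
      rwa [hasDerivWithinAt_iff_tendsto_slope' (by simp)] at this
    obtain ⟨y, hyb, hxy⟩ := ((h1.eventually (gt_mem_nhds hb)).and self_mem_nhdsWithin).exists
    have hxy : x < y := hxy
    -- the slope towards the fixed point `y` depends continuously on the base point
    have h2 : ContinuousAt (fun z => (f y - f z) / (y - z)) x :=
      (continuousAt_const.sub hf.continuous_univ.continuousAt).div
        (continuousAt_const.sub continuousAt_id) (by simpa [sub_eq_zero] using hxy.ne')
    rw [slope_def_field] at hyb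
    have h3 : ∀ᶠ z in 𝓝 x, (f y - f z) / (y - z) < b := h2.eventually (gt_mem_nhds hyb)
    filter_upwards [nhdsWithin_le_nhds h3, nhdsWithin_le_nhds (gt_mem_nhds hxy)] with z hz hzy
    refine lt_of_le_of_lt ?_ hz
    rw [← slope_def_field]
    exact hf.rightDeriv_le_slope_of_mem_interior (by simp) (mem_univ _) hzy

/-- The right derivative of a convex function on `ℝ`, as a Stieltjes function. -/
def rightDerivStieltjes (f : ℝ → ℝ) (hf : ConvexOn ℝ univ f) : StieltjesFunction ℝ where
  toFun x := derivWithin f (Ioi x) x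
  mono' := hf.monotone_rightDeriv_univ
  right_continuous' := hf.rightDeriv_continuousWithinAt

/-- A decreasing piece of a convex function forces it to tend to `+∞` at `-∞`. -/
lemma monotone_of_convex_of_tendsto {q : ℝ → ℝ} (hq : ConvexOn ℝ univ q)
    (h0 : Tendsto q atBot (𝓝 0)) : Monotone q := by
  intro s t hst
  by_contra! hlt
  have hst : s < t := lt_of_le_of_ne hst (by rintro rfl; exact lt_irrefl _ hlt)
  -- left of `s` the graph lies above the line through `(s, q s)` and `(t, q t)`
  have key : ∀ u < s, q s + (q s - q t) / (t - s) * (s - u) ≤ q u := by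
    intro u hu
    have := hq.slope_mono_adjacent (mem_univ u) (mem_univ t) hu hst
    rw [div_le_iff₀ (by linarith)] at this
    have e : (q s - q t) / (t - s) = - ((q t - q s) / (t - s)) := by ring
    rw [e]; linarith
  have hm : 0 < (q s - q t) / (t - s) := div_pos (by linarith) (by linarith)
  have hT : Tendsto q atBot atTop := by
    refine tendsto_atTop_mono' _ ((eventually_lt_atBot s).mono key) ?_
    refine tendsto_atTop_add_const_left _ _ (Tendsto.const_mul_atTop hm ?_)
    exact tendsto_atTop_add_const_left _ _ tendsto_neg_atBot_atTop
  exact not_tendsto_nhds_of_tendsto_atTop hT 0 h0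

lemma lintegral_rightDeriv_Ioc {q : ℝ → ℝ} (hq : ConvexOn ℝ univ q) (hm : Monotone q)
    {a b : ℝ} (hab : a ≤ b) :
    ∫⁻ u in Ioc a b, ENNReal.ofReal (derivWithin q (Ioi u) u) = ENNReal.ofReal (q b - q a) := by
  have hint : IntervalIntegrable (fun u => derivWithin q (Ioi u) u) volume a b :=
    hq.monotone_rightDeriv_univ.intervalIntegrable
  have h := intervalIntegral.integral_eq_sub_of_hasDeriv_right (a := a) (b := b) (f := q)
    hq.continuous_univ.continuousOn
    (fun x _ => hq.hasDerivWithinAt_rightDeriv_of_mem_interior (x := x) (by simp)) hint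
  rw [← h, intervalIntegral.integral_of_le hab, ofReal_integral_eq_lintegral_ofReal]
  · exact (intervalIntegrable_iff_integrableOn_Ioc_of_le hab).1 hint
  · exact Eventually.of_forall fun u => hm.monotoneOn _ |>.derivWithin_nonneg

/-- Every convex function vanishing at `-∞` is the put function of the measure whose
distribution function is its right derivative. -/
lemma lintegral_rightDerivStieltjes {q : ℝ → ℝ} (hq : ConvexOn ℝ univ q)
    (h0 : Tendsto q atBot (𝓝 0)) (t : ℝ) :
    ∫⁻ s, ENNReal.ofReal (t - s) ∂(rightDerivStieltjes q hq).measure = ENNReal.ofReal (q t) := by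
  have hm := monotone_of_convex_of_tendsto hq h0
  have hF0 : Tendsto (rightDerivStieltjes q hq) atBot (𝓝 0) := by
    have h1 : Tendsto (fun u => q (u + 1) - q u) atBot (𝓝 (0 - 0)) :=
      (h0.comp (tendsto_atBot_add_const_right _ _ tendsto_id)).sub h0
    rw [sub_zero] at h1
    refine squeeze_zero (fun u => (hm.monotoneOn _).derivWithin_nonneg) (fun u => ?_) h1
    have := hq.add_rightDeriv_mul_le u (u + 1)
    change derivWithin q (Ioi u) u ≤ _
    linarith
  set γ := (rightDerivStieltjes q hq).measure with hγ
  have hIic : ∀ u, γ (Iic u) = ENNReal.ofReal (derivWithin q (Ioi u) u) := by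
    intro u
    rw [hγ, StieltjesFunction.measure_Iic _ hF0, sub_zero]; rfl
  have hS : MeasurableSet {p : ℝ × ℝ | p.1 ≤ p.2} := measurableSet_le measurable_fst measurable_snd
  calc ∫⁻ s, ENNReal.ofReal (t - s) ∂γ
      = ∫⁻ s, (∫⁻ u in Iio t, {p : ℝ × ℝ | p.1 ≤ p.2}.indicator 1 (s, u)) ∂γ := by
        refine lintegral_congr fun s => ?_
        have : (fun u : ℝ => {p : ℝ × ℝ | p.1 ≤ p.2}.indicator (1 : ℝ × ℝ → ℝ≥0∞) (s, u))
            = (Ici s).indicator 1 := by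
          ext u; simp [indicator]
        rw [this, lintegral_indicator_one measurableSet_Ici, Measure.restrict_apply measurableSet_Ici,
          Ici_inter_Iio, Real.volume_Ico]
    _ = ∫⁻ u in Iio t, (∫⁻ s, {p : ℝ × ℝ | p.1 ≤ p.2}.indicator 1 (s, u) ∂γ) := by
        rw [lintegral_lintegral_swap]
        exact ((measurable_one.indicator hS)).aemeasurable
    _ = ∫⁻ u in Iio t, ENNReal.ofReal (derivWithin q (Ioi u) u) := by
        refine lintegral_congr fun u => ?_
        have : (fun s : ℝ => {p : ℝ × ℝ | p.1 ≤ p.2}.indicator (1 : ℝ × ℝ → ℝ≥0∞) (s, u))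
            = (Iic u).indicator 1 := by
          ext s; simp [indicator]
        rw [this, lintegral_indicator_one measurableSet_Iic, hIic]
    _ = ∫⁻ u in Iic t, ENNReal.ofReal (derivWithin q (Ioi u) u) := by
        rw [restrict_Iio_eq_restrict_Iic]
    _ = ENNReal.ofReal (q t) := by
        have hmeas : Measurable fun u => ENNReal.ofReal (derivWithin q (Ioi u) u) :=
          hq.monotone_rightDeriv_univ.measurable.ennreal_ofReal
        have hc : AECover (volume.restrict (Iic t)) (atBot : Filter ℝ) (fun a => Ioi a) :=
          aecover_Ioi tendsto_id
        have h1 := hc.lintegral_tendsto_of_countably_generated hmeas.aemeasurable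
        have h2 : Tendsto (fun a => ENNReal.ofReal (q t - q a)) atBot
            (𝓝 (ENNReal.ofReal (q t - 0))) :=
          (ENNReal.continuous_ofReal.tendsto _).comp (tendsto_const_nhds.sub h0)
        rw [sub_zero] at h2
        refine tendsto_nhds_unique h1 (h2.congr' ?_)
        filter_upwards [eventually_le_atBot t] with a ha
        rw [Measure.restrict_restrict measurableSet_Ioi, Ioi_inter_Iic,
          lintegral_rightDeriv_Ioc hq hm ha]

/-! ### Convex envelopes -/

/-- The largest convex minorant of `D`, as the pointwise supremum of all convex minorants. The
supremum has a junk value if there is no convex minorant, so the lemmas below assume one. -/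
def convexEnvelope (D : ℝ → ℝ) (t : ℝ) : ℝ :=
  sSup {y | ∃ f : ℝ → ℝ, ConvexOn ℝ univ f ∧ f ≤ D ∧ f t = y}

lemma le_convexEnvelope {D f : ℝ → ℝ} (hf : ConvexOn ℝ univ f) (hfD : f ≤ D) :
    f ≤ convexEnvelope D := fun t =>
  le_csSup ⟨D t, by rintro _ ⟨g, -, hg, rfl⟩; exact hg t⟩ ⟨f, hf, hfD, rfl⟩

lemma convexEnvelope_le {D f : ℝ → ℝ} (hf : ConvexOn ℝ univ f) (hfD : f ≤ D) :
    convexEnvelope D ≤ D := fun t =>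
  csSup_le ⟨_, f, hf, hfD, rfl⟩ (by rintro _ ⟨g, -, hg, rfl⟩; exact hg t)

lemma convexOn_convexEnvelope {D f : ℝ → ℝ} (hf : ConvexOn ℝ univ f) (hfD : f ≤ D) :
    ConvexOn ℝ univ (convexEnvelope D) := by
  refine ⟨convex_univ, fun x _ y _ a b ha hb hab => ?_⟩
  refine csSup_le ⟨_, f, hf, hfD, rfl⟩ ?_
  rintro _ ⟨g, hg, hgD, rfl⟩
  refine (hg.2 (mem_univ x) (mem_univ y) ha hb hab).trans ?_
  have := le_convexEnvelope hg hgD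
  exact add_le_add (smul_le_smul_of_nonneg_left (this x) ha)
    (smul_le_smul_of_nonneg_left (this y) hb)

lemma convexOn_affine (a m t : ℝ) : ConvexOn ℝ univ (fun s : ℝ => a + m * (s - t)) := by
  refine ⟨convex_univ, fun x _ y _ b c _ _ hbc => le_of_eq ?_⟩
  simp only [smul_eq_mul]
  linear_combination (m * t - a) * hbc

/-- If `f`, `g` are convex and `c` is the convex envelope of `f - g`, then `f - c` is convex. Let `ℓ`
be the chord of `f - c` over `[x, y]`. Since `g ≤ f - c`, the convex function `g` lies below `ℓ`
on `[x, y]`, so `f - ℓ ≤ f - g` there. If `f - ℓ` exceeded `c` at an interior point, its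
supporting line there would minorise `f - g` on `[x, y]`, and outside `[x, y]` it would lie below
`c` because it crosses `c` inside; as an affine minorant of `f - g` it would then be below `c` everywhere,
a contradiction. -/
lemma convexOn_sub_convexEnvelope {f g k : ℝ → ℝ} (hf : ConvexOn ℝ univ f)
    (hg : ConvexOn ℝ univ g) (hk : ConvexOn ℝ univ k) (hkD : k ≤ f - g) :
    ConvexOn ℝ univ (f - convexEnvelope (f - g)) := by
  set c := convexEnvelope (f - g) with hc
  have hcc : ConvexOn ℝ univ c := convexOn_convexEnvelope hk hkD
  have hcD : c ≤ f - g := convexEnvelope_le hk hkD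
  refine convexOn_of_slope_mono_adjacent convex_univ fun {x t y} _ _ hxt hty => ?_
  have hxy : x < y := hxt.trans hty
  -- `m` and `ℓ` are the slope and the equation of the chord of `f - c` over `[x, y]`
  set m := ((f - c) y - (f - c) x) / (y - x) with hm
  have hmy : (f - c) y = (f - c) x + m * (y - x) := by
    rw [hm, div_mul_cancel₀ _ (by linarith)]; ring
  set ℓ : ℝ → ℝ := fun s => (f - c) x + m * (s - x) with hℓ
  have key : (f - c) t ≤ ℓ t := by
    by_contra! hlt
    have hh : ConvexOn ℝ univ (fun s => f s - ℓ s) := by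
      have := hf.add (convexOn_affine (-(f - c) x) (-m) x)
      refine this.congr fun s _ => ?_
      simp only [Pi.add_apply, hℓ, Pi.sub_apply]; ring
    have hsup := hh.add_rightDeriv_mul_le t
    set d := derivWithin (fun s => f s - ℓ s) (Ioi t) t with hd
    have hx0 := hsup x
    have hy0 := hsup y
    have hxℓ : f x - ℓ x = c x := by simp [hℓ]
    have hyℓ : f y - ℓ y = c y := by
      have : ℓ y = (f - c) y := hmy.symm
      rw [this]; simp
    have htℓ : c t < f t - ℓ t := by simp only [Pi.sub_apply] at hlt; linarith
    -- the supporting line of `f - ℓ` at `t` minorises `f - g`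
    have hmin : (fun s => (f t - ℓ t) + d * (s - t)) ≤ f - g := by
      intro s
      rcases lt_or_ge s x with hs | hs
      · refine le_trans ?_ (hcD s)
        have h1 := hcc.slope_mono_adjacent (mem_univ s) (mem_univ t) hs hxt
        rw [div_le_div_iff₀ (by linarith) (by linarith)] at h1
        have h2 : 0 < t - x := by linarith
        simp only
        by_contra! hcon
        nlinarith
      rcases lt_or_ge y s with hs' | hs'
      · refine le_trans ?_ (hcD s)
        have h1 := hcc.slope_mono_adjacent (mem_univ t) (mem_univ s) hty hs'
        rw [div_le_div_iff₀ (by linarith) (by linarith)] at h1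
        have h2 : 0 < y - t := by linarith
        simp only
        by_contra! hcon
        nlinarith
      · refine (hsup s).trans ?_
        have hgx : g x ≤ ℓ x := by have := hcD x; simp only [Pi.sub_apply] at this; linarith
        have hgy : g y ≤ ℓ y := by have := hcD y; simp only [Pi.sub_apply] at this; linarith
        have hgl : ConvexOn ℝ univ (fun s => g s - ℓ s) := by
          have := hg.add (convexOn_affine (-(f - c) x) (-m) x)
          refine this.congr fun s _ => ?_
          simp only [Pi.add_apply, hℓ, Pi.sub_apply]; ring
        have := hgl.le_max_of_mem_Icc (mem_univ x) (mem_univ y) ⟨hs, hs'⟩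
        have h3 : max (g x - ℓ x) (g y - ℓ y) ≤ 0 := max_le (by linarith) (by linarith)
        simp only [Pi.sub_apply]
        linarith
    have := le_convexEnvelope (convexOn_affine _ d t) hmin t
    simp only [sub_self, mul_zero, add_zero] at this
    linarith
  simp only [hℓ] at key
  have h1 : ((f - c) t - (f - c) x) / (t - x) ≤ m := by
    rw [div_le_iff₀ (by linarith)]; linarith
  have h2 : m ≤ ((f - c) y - (f - c) t) / (y - t) := by
    rw [le_div_iff₀ (by linarith)]; linarith
  exact h1.trans h2

/-! ### Put functions and the convex-decreasing order -/

lemma FiniteFirstMoment.integrable_of_linearGrowth {μ : Measure ℝ} (hμ : FiniteFirstMoment μ)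
    {φ : ℝ → ℝ} (hφ : Measurable φ) (hL : LinearGrowth φ) : Integrable φ μ := by
  have := hμ.1
  obtain ⟨C, hC⟩ := hL
  exact Integrable.mono' (((integrable_const 1).add hμ.2.abs).const_mul C)
    hφ.aestronglyMeasurable (Eventually.of_forall hC)

lemma convexOn_putFun (t : ℝ) : ConvexOn ℝ univ (fun s : ℝ => max (t - s) 0) := by
  have := (convexOn_affine 0 (-1) t).sup (convexOn_const (0 : ℝ) convex_univ)
  refine this.congr fun s _ => ?_
  simp

lemma antitone_putFun (t : ℝ) : Antitone (fun s : ℝ => max (t - s) 0) := fun a b hab =>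
  max_le_max (by linarith) le_rfl

lemma linearGrowth_putFun (t : ℝ) : LinearGrowth (fun s : ℝ => max (t - s) 0) := by
  refine ⟨1 + |t|, fun s => ?_⟩
  rw [abs_of_nonneg (le_max_right _ _)]
  refine max_le ?_ (by positivity)
  nlinarith [le_abs_self t, neg_abs_le s, abs_nonneg t, abs_nonneg s,
    mul_nonneg (abs_nonneg t) (abs_nonneg s)]

section put
variable {μ ν : Measure ℝ}

lemma FiniteFirstMoment.integrable_putFun (hμ : FiniteFirstMoment μ) (t : ℝ) :
    Integrable (fun s : ℝ => max (t - s) 0) μ :=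
  hμ.integrable_of_linearGrowth (by fun_prop) (linearGrowth_putFun t)

lemma put_nonneg (μ : Measure ℝ) (t : ℝ) : 0 ≤ put μ t :=
  integral_nonneg fun _ => le_max_right _ _

lemma FiniteFirstMoment.ofReal_put (hμ : FiniteFirstMoment μ) (t : ℝ) :
    ENNReal.ofReal (put μ t) = ∫⁻ s, ENNReal.ofReal (t - s) ∂μ := by
  rw [put, ofReal_integral_eq_lintegral_ofReal (hμ.integrable_putFun t)
    (Eventually.of_forall fun _ => le_max_right _ _)]
  refine lintegral_congr fun s => ?_
  rw [ENNReal.ofReal_max, ENNReal.ofReal_zero, max_eq_left zero_le]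

lemma FiniteFirstMoment.convexOn_put (hμ : FiniteFirstMoment μ) : ConvexOn ℝ univ (put μ) := by
  refine ⟨convex_univ, fun x _ y _ a b ha hb hab => ?_⟩
  simp only [put, smul_eq_mul]
  rw [← integral_const_mul, ← integral_const_mul, ← integral_add
    ((hμ.integrable_putFun x).const_mul a) ((hμ.integrable_putFun y).const_mul b)]
  refine integral_mono (hμ.integrable_putFun _)
    (((hμ.integrable_putFun x).const_mul a).add ((hμ.integrable_putFun y).const_mul b))
    fun s => ?_
  refine max_le ?_ (by positivity)
  have : a * x + b * y - s = a * (x - s) + b * (y - s) := by linear_combination (-s) * (hab.symm)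
  rw [this]
  gcongr <;> exact le_max_left _ _

lemma FiniteFirstMoment.tendsto_put (hμ : FiniteFirstMoment μ) :
    Tendsto (put μ) atBot (𝓝 0) := by
  have : Tendsto (put μ) atBot (𝓝 (∫ _, (0 : ℝ) ∂μ)) := by
    refine tendsto_integral_filter_of_dominated_convergence (fun s => |s|) ?_ ?_ hμ.2.abs ?_
    · exact Eventually.of_forall fun t => (hμ.integrable_putFun t).aestronglyMeasurable
    · filter_upwards [eventually_le_atBot 0] with t ht
      refine Eventually.of_forall fun s => ?_
      rw [Real.norm_of_nonneg (le_max_right _ _)]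
      exact max_le (by linarith [neg_abs_le s]) (abs_nonneg s)
    · refine Eventually.of_forall fun s => tendsto_const_nhds.congr' ?_
      filter_upwards [eventually_le_atBot s] with t ht
      rw [max_eq_right (by linarith)]
  simpa using this

lemma FiniteFirstMoment.le_put (hμ : FiniteFirstMoment μ) (t : ℝ) :
    μ.real univ * t - ∫ s, s ∂μ ≤ put μ t := by
  have := hμ.1
  have : μ.real univ * t - ∫ s, s ∂μ = ∫ s, (t - s) ∂μ := by
    rw [integral_sub (integrable_const t) hμ.2]; simp
  rw [this]
  exact integral_mono ((integrable_const t).sub hμ.2) (hμ.integrable_putFun t)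
    fun s => le_max_left _ _

lemma FiniteFirstMoment.put_le (hμ : FiniteFirstMoment μ) {t : ℝ} (ht : 0 ≤ t) :
    put μ t ≤ μ.real univ * t + ∫ s, |s| ∂μ := by
  have := hμ.1
  have : μ.real univ * t + ∫ s, |s| ∂μ = ∫ s, (t + |s|) ∂μ := by
    rw [integral_add (integrable_const t) hμ.2.abs]; simp
  rw [this]
  exact integral_mono (hμ.integrable_putFun t) ((integrable_const t).add hμ.2.abs)
    fun s => max_le (by linarith [neg_abs_le s]) (by positivity)

lemma PCDOrder.put_le (h : PCDOrder μ ν) : put μ ≤ put ν := fun t =>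
  h _ (convexOn_putFun t) (antitone_putFun t) (fun _ => le_max_right _ _) (linearGrowth_putFun t)

lemma CDOrder.pcdOrder (h : CDOrder μ ν) : PCDOrder μ ν := fun φ h1 h2 _ h4 => h φ h1 h2 h4

lemma CDOrder.measureReal_univ (h : CDOrder μ ν) : μ.real univ = ν.real univ := by
  have key : ∀ a : ℝ, μ.real univ * a ≤ ν.real univ * a := fun a => by
    have := h (fun _ => a) (convexOn_const a convex_univ) antitone_const
      ⟨|a|, fun x => by nlinarith [abs_nonneg a, abs_nonneg x, mul_nonneg (abs_nonneg a) (abs_nonneg x)]⟩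
    simpa using this
  have h1 := key 1
  have h2 := key (-1)
  linarith

lemma PCDOrder.measureReal_univ_le (h : PCDOrder μ ν) : μ.real univ ≤ ν.real univ := by
  have := h (fun _ => 1) (convexOn_const 1 convex_univ) antitone_const (fun _ => zero_le_one)
      ⟨1, fun x => by simp⟩
  simpa using this

/-- Comparison of slopes at `+∞`. -/
lemma le_of_mul_le_mul_add {a b K : ℝ} (h : ∀ t : ℝ, 0 ≤ t → a * t ≤ b * t + K) : a ≤ b := by
  by_contra! hlt
  have := h ((|K| + 1) / (a - b)) (div_nonneg (by positivity) (by linarith))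
  have e : (a - b) * ((|K| + 1) / (a - b)) = |K| + 1 := by
    rw [mul_div_cancel₀]; linarith
  nlinarith [le_abs_self K]

lemma mul_measure_Iic_add_le (μ : Measure ℝ) (t : ℝ) {ε : ℝ} (hε : 0 ≤ ε) :
    ENNReal.ofReal ε * μ (Iic t) + ∫⁻ s, ENNReal.ofReal (t - s) ∂μ
      ≤ ∫⁻ s, ENNReal.ofReal (t + ε - s) ∂μ := by
  rw [← lintegral_indicator_const measurableSet_Iic, ← lintegral_add_right _ (by fun_prop)]
  refine lintegral_mono fun s => ?_
  by_cases hs : s ≤ t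
  · rw [indicator_of_mem (by exact hs), ← ENNReal.ofReal_add hε (by linarith)]
    exact ENNReal.ofReal_le_ofReal (by linarith)
  · rw [indicator_of_notMem (by exact hs), zero_add]
    exact ENNReal.ofReal_le_ofReal (by linarith)

lemma le_mul_measure_Iic_add (μ : Measure ℝ) (t ε : ℝ) :
    ∫⁻ s, ENNReal.ofReal (t + ε - s) ∂μ
      ≤ ENNReal.ofReal ε * μ (Iic (t + ε)) + ∫⁻ s, ENNReal.ofReal (t - s) ∂μ := by
  rw [← lintegral_indicator_const measurableSet_Iic, ← lintegral_add_right _ (by fun_prop)]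
  refine lintegral_mono fun s => ?_
  by_cases hs : s ≤ t + ε
  · rw [indicator_of_mem (by exact hs)]
    refine (ENNReal.ofReal_le_ofReal ?_).trans ENNReal.ofReal_add_le
    linarith
  · rw [ENNReal.ofReal_of_nonpos (by linarith)]
    exact zero_le

/-- The difference quotients of the put function over `[t, t + ε]` lie between `μ (Iic t)` and
`μ (Iic (t + ε))`, and `ν (Iic (t + ε))` decreases to `ν (Iic t)`. -/
lemma measure_Iic_le_of_lintegral_eq
    (hfin : ∀ t, ∫⁻ s, ENNReal.ofReal (t - s) ∂μ ≠ ∞)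
    (h : ∀ t, ∫⁻ s, ENNReal.ofReal (t - s) ∂μ = ∫⁻ s, ENNReal.ofReal (t - s) ∂ν) (t : ℝ) :
    μ (Iic t) ≤ ν (Iic t) := by
  have h1 : ∀ ε > 0, μ (Iic t) ≤ ν (Iic (t + ε)) := by
    intro ε hε
    have := (mul_measure_Iic_add_le μ t hε.le).trans_eq (h (t + ε))
    have := this.trans (le_mul_measure_Iic_add ν t ε)
    rw [← h t] at this
    have := (ENNReal.add_le_add_iff_right (hfin t)).1 this
    exact (ENNReal.mul_le_mul_iff_right (by simpa using hε) ENNReal.ofReal_ne_top).1 this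
  have hν : ∀ r, ν (Iic r) ≠ ∞ := by
    intro r hr
    have := mul_measure_Iic_add_le ν r zero_le_one
    rw [← h (r + 1), hr] at this
    simp at this
    exact hfin _ this
  have h2 : Iic t = ⋂ n : ℕ, Iic (t + 1 / ((n : ℝ) + 1)) := by
    ext s
    simp only [mem_Iic, mem_iInter]
    refine ⟨fun hs n => hs.trans (by linarith [Nat.one_div_pos_of_nat (α := ℝ) (n := n)]),
      fun hs => ?_⟩
    have := tendsto_one_div_add_atTop_nhds_zero_nat (𝕜 := ℝ)
    have := (tendsto_const_nhds (x := t)).add this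
    rw [add_zero] at this
    exact ge_of_tendsto' this hs
  have h3 := tendsto_measure_iInter_atTop (μ := ν) (s := fun n : ℕ => Iic (t + 1 / ((n : ℝ) + 1)))
    (fun n => measurableSet_Iic.nullMeasurableSet)
    (fun m n hmn => Iic_subset_Iic.2 (by gcongr)) ⟨0, hν _⟩
  rw [← h2] at h3
  exact ge_of_tendsto' h3 fun n => h1 _ Nat.one_div_pos_of_nat

/-- A measure is determined by its put function. -/
lemma measure_eq_of_lintegral_eq [IsLocallyFiniteMeasure μ]
    (hfin : ∀ t, ∫⁻ s, ENNReal.ofReal (t - s) ∂μ ≠ ∞)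
    (h : ∀ t, ∫⁻ s, ENNReal.ofReal (t - s) ∂μ = ∫⁻ s, ENNReal.ofReal (t - s) ∂ν) : μ = ν := by
  have hI : ∀ t, μ (Iic t) = ν (Iic t) := fun t =>
    le_antisymm (measure_Iic_le_of_lintegral_eq hfin h t)
      (measure_Iic_le_of_lintegral_eq (fun t => h t ▸ hfin t) (fun t => (h t).symm) t)
  have hμ : ∀ r, μ (Iic r) ≠ ∞ := by
    intro r hr
    have := mul_measure_Iic_add_le μ r zero_le_one
    rw [hr] at this
    simp at this
    exact hfin _ this
  refine Measure.ext_of_Ioc _ _ fun a b hab => ?_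
  have hIoc : Ioc a b = Iic b \ Iic a := by ext; simp [and_comm]
  rw [hIoc,
    measure_sdiff (Iic_subset_Iic.2 hab.le) measurableSet_Iic.nullMeasurableSet (hμ a),
    measure_sdiff (Iic_subset_Iic.2 hab.le) measurableSet_Iic.nullMeasurableSet (hI a ▸ hμ a), hI, hI]

/-- Truncating a convex nonincreasing `φ` at the level `φ N` gives, up to the constant `φ N`, a mixture
of put payoffs `(t - x)⁺`, so the put functions control its integral. -/
lemma integral_max_le_of_put_le (hμ : FiniteFirstMoment μ) (hν : FiniteFirstMoment ν)
    (hm : μ.real univ = ν.real univ) (h : put μ ≤ put ν) {φ : ℝ → ℝ}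
    (hφ : ConvexOn ℝ univ φ) (ha : Antitone φ) (hL : LinearGrowth φ) (N : ℝ) :
    ∫ x, max (φ x) (φ N) ∂μ ≤ ∫ x, max (φ x) (φ N) ∂ν := by
  -- the reflection of `max φ (φ N) - φ N` is convex and vanishes near `-∞`
  set q : ℝ → ℝ := fun x => max (φ (-x)) (φ N) - φ N with hq
  have hqc : ConvexOn ℝ univ q := by
    have h1 : ConvexOn ℝ univ (fun x => φ (-x)) := by
      have := hφ.comp_linearMap (-LinearMap.id)
      simpa [Function.comp_def] using this
    exact ((h1.sup (convexOn_const (φ N) convex_univ)).add_const (-φ N)).congr fun x _ => by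
      simp [hq, sub_eq_add_neg]
  have hq0 : Tendsto q atBot (𝓝 0) := by
    refine tendsto_const_nhds.congr' ?_
    filter_upwards [eventually_le_atBot (-N)] with x hx
    simp only [hq]
    rw [max_eq_right (ha (by linarith)), sub_self]
  set γ := (rightDerivStieltjes q hqc).measure with hγ
  have hrep : ∀ α : Measure ℝ, FiniteFirstMoment α →
      ∫⁻ x, ENNReal.ofReal (q (-x)) ∂α = ∫⁻ s, ENNReal.ofReal (put α (-s)) ∂γ := by
    intro α hα
    have := hα.1
    simp_rw [hα.ofReal_put, ← lintegral_rightDerivStieltjes hqc hq0]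
    rw [lintegral_lintegral_swap (by fun_prop)]
    refine lintegral_congr fun s => lintegral_congr fun x => ?_
    congr 1; ring
  have hq' : ∀ x, q (-x) = max (φ x) (φ N) - φ N := fun x => by simp [hq]
  have hqn : ∀ x, 0 ≤ max (φ x) (φ N) - φ N := fun x => by
    linarith [le_max_right (φ x) (φ N)]
  have hI : ∀ α : Measure ℝ, FiniteFirstMoment α →
      Integrable (fun x => max (φ x) (φ N)) α := fun α hα => by
    have := hα.1
    exact (hα.integrable_of_linearGrowth ha.measurable hL).sup (integrable_const (φ N))
  have hint : ∀ α : Measure ℝ, FiniteFirstMoment α →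
      ∫ x, max (φ x) (φ N) ∂α
        = (∫⁻ x, ENNReal.ofReal (q (-x)) ∂α).toReal + α.real univ * φ N := by
    intro α hα
    have := hα.1
    simp_rw [hq']
    rw [← integral_eq_lintegral_of_nonneg_ae (Eventually.of_forall hqn)
      ((hI α hα).sub (integrable_const _)).aestronglyMeasurable,
      integral_sub (hI α hα) (integrable_const _)]
    simp
  rw [hint μ hμ, hint ν hν, hm]
  refine add_le_add_left (ENNReal.toReal_mono ?_ ?_) _
  · simp_rw [hq']
    have := hν.1
    have hsub : Integrable (fun x => max (φ x) (φ N) - φ N) ν :=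
      (hI ν hν).sub (integrable_const _)
    exact (hasFiniteIntegral_iff_ofReal (Eventually.of_forall hqn)).1 hsub.2 |>.ne
  · rw [hrep μ hμ, hrep ν hν]
    exact lintegral_mono fun s => ENNReal.ofReal_le_ofReal (h _)

/-- Equal masses and ordered put functions imply the convex-decreasing order; the converse is
`PCDOrder.put_le` and `CDOrder.measureReal_univ`. -/
lemma cdOrder_of_put_le (hμ : FiniteFirstMoment μ) (hν : FiniteFirstMoment ν)
    (hm : μ.real univ = ν.real univ) (h : put μ ≤ put ν) : CDOrder μ ν := by
  intro φ hφ ha hL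
  have hlim : ∀ α : Measure ℝ, FiniteFirstMoment α →
      Tendsto (fun N : ℝ => ∫ x, max (φ x) (φ N) ∂α) atTop (𝓝 (∫ x, φ x ∂α)) := by
    intro α hα
    have := hα.1
    have hI := hα.integrable_of_linearGrowth ha.measurable hL
    refine tendsto_integral_filter_of_dominated_convergence (fun x => |φ x| + |φ 0|) ?_ ?_
      (hI.abs.add (integrable_const _)) ?_
    · exact Eventually.of_forall fun N => (ha.measurable.max measurable_const).aestronglyMeasurable
    · filter_upwards [eventually_ge_atTop 0] with N hN
      refine Eventually.of_forall fun x => abs_le.2 ⟨?_, max_le ?_ ?_⟩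
      · linarith [le_max_left (φ x) (φ N), neg_abs_le (φ x), abs_nonneg (φ 0)]
      · linarith [le_abs_self (φ x), abs_nonneg (φ 0)]
      · linarith [ha hN, le_abs_self (φ 0), abs_nonneg (φ x)]
    · refine Eventually.of_forall fun x => tendsto_const_nhds.congr' ?_
      filter_upwards [eventually_ge_atTop x] with N hN
      rw [max_eq_left (ha hN)]
  exact le_of_tendsto_of_tendsto' (hlim μ hμ) (hlim ν hν)
    fun N => integral_max_le_of_put_le hμ hν hm h hφ ha hL N

lemma CDOrder.antisymm (hμ : FiniteFirstMoment μ) (hν : FiniteFirstMoment ν)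
    (h1 : CDOrder μ ν) (h2 : CDOrder ν μ) : μ = ν := by
  have := hμ.1
  refine measure_eq_of_lintegral_eq (fun t => ?_) fun t => ?_
  · rw [← hμ.ofReal_put]; exact ENNReal.ofReal_ne_top
  · rw [← hμ.ofReal_put, ← hν.ofReal_put,
      le_antisymm (h1.pcdOrder.put_le t) (h2.pcdOrder.put_le t)]

lemma FiniteFirstMoment.of_le (hν : FiniteFirstMoment ν) (h : μ ≤ ν) : FiniteFirstMoment μ := by
  have := hν.1
  exact ⟨isFiniteMeasure_of_le ν h, hν.2.mono_measure h⟩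

/-- The difference is the put function of `ν - μ`. -/
lemma convexOn_put_sub_put (hν : FiniteFirstMoment ν) (h : μ ≤ ν) :
    ConvexOn ℝ univ (put ν - put μ) := by
  have := hν.1
  have := (hν.of_le h).1
  have hρ : FiniteFirstMoment (ν - μ) := hν.of_le Measure.sub_le
  refine hρ.convexOn_put.congr fun t _ => ?_
  have : put ν t = put (ν - μ) t + put μ t := by
    conv_lhs => rw [put, ← Measure.sub_add_cancel_of_le h]
    exact integral_add_measure (hρ.integrable_putFun t) ((hν.of_le h).integrable_putFun t)
  simp [this]

end put

/-! ### The shadow -/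

/-- Both `put ν - c` and `c`, with `c` the convex envelope of `put ν - put μ`, are put functions of
measures; these measures add up to `ν` because a measure is determined by its put function. -/
lemma exists_put_eq_sub_convexEnvelope
    {μ ν : Measure ℝ} (hμ : FiniteFirstMoment μ) (hν : FiniteFirstMoment ν) (h : put μ ≤ put ν) :
    ∃ θ : Measure ℝ, θ ≤ ν ∧ put θ = put ν - convexEnvelope (put ν - put μ) := by
  set c := convexEnvelope (put ν - put μ) with hc
  have hz : ConvexOn ℝ univ (fun _ : ℝ => (0 : ℝ)) := convexOn_const 0 convex_univ
  have hzD : (fun _ : ℝ => (0 : ℝ)) ≤ put ν - put μ := fun t => sub_nonneg.2 (h t)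
  have hcc : ConvexOn ℝ univ c := convexOn_convexEnvelope hz hzD
  have hcD : c ≤ put ν - put μ := convexEnvelope_le hz hzD
  have hc0 : ∀ t, 0 ≤ c t := le_convexEnvelope hz hzD
  have hpc : ConvexOn ℝ univ (put ν - c) :=
    convexOn_sub_convexEnvelope hν.convexOn_put hμ.convexOn_put hz hzD
  have hct : Tendsto c atBot (𝓝 0) := squeeze_zero hc0
    (fun t => (hcD t).trans (sub_le_self _ (put_nonneg μ t))) hν.tendsto_put
  have hpt : Tendsto (put ν - c) atBot (𝓝 0) := by
    have := hν.tendsto_put.sub hct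
    rwa [sub_zero] at this
  have hp0 : ∀ t, 0 ≤ (put ν - c) t := fun t => by
    have := hcD t; simp only [Pi.sub_apply] at this ⊢; linarith [put_nonneg μ t]
  have e1 := lintegral_rightDerivStieltjes hpc hpt
  have e2 := lintegral_rightDerivStieltjes hcc hct
  set θ := (rightDerivStieltjes _ hpc).measure
  set ρ := (rightDerivStieltjes _ hcc).measure
  have hsum : ν = θ + ρ := by
    have := hν.1
    refine measure_eq_of_lintegral_eq (fun t => ?_) fun t => ?_
    · rw [← hν.ofReal_put]; exact ENNReal.ofReal_ne_top
    · rw [← hν.ofReal_put, lintegral_add_measure, e1, e2, ← ENNReal.ofReal_add (hp0 t) (hc0 t)]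
      simp
  have hle : θ ≤ ν := hsum ▸ Measure.le_add_right le_rfl
  refine ⟨θ, hle, funext fun t => ?_⟩
  have := e1 t
  rw [← (hν.of_le hle).ofReal_put] at this
  exact (ENNReal.ofReal_eq_ofReal_iff (put_nonneg _ _) (hp0 t)).1 this

/-- The candidate for the shadow has the mass of `μ`: the inequality `≤` comes from `put μ ≤ put θ`,
and `≥` holds since the envelope has slope at least `ν(ℝ) - μ(ℝ)` at `+∞`. -/
lemma mass_eq_of_put_eq
    {μ ν θ : Measure ℝ} (hμ : FiniteFirstMoment μ) (hν : FiniteFirstMoment ν)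
    (hθ : FiniteFirstMoment θ) (h : put μ ≤ put ν) (hm : μ.real univ ≤ ν.real univ)
    (hput : put θ = put ν - convexEnvelope (put ν - put μ)) :
    μ.real univ = θ.real univ := by
  have hz : ConvexOn ℝ univ (fun _ : ℝ => (0 : ℝ)) := convexOn_const 0 convex_univ
  have hzD : (fun _ : ℝ => (0 : ℝ)) ≤ put ν - put μ := fun t => sub_nonneg.2 (h t)
  apply le_antisymm
  · refine le_of_mul_le_mul_add (K := ∫ s, |s| ∂θ + ∫ s, s ∂μ) fun t ht => ?_
    have h1 := hμ.le_put t
    have h2 := hθ.put_le ht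
    have h3 := convexEnvelope_le hz hzD t
    have h4 := congrFun hput t
    simp only [Pi.sub_apply] at h3 h4
    linarith
  · set K := |∫ s, s ∂ν| + ∫ s, |s| ∂μ with hK
    have hKμ : 0 ≤ ∫ s, |s| ∂μ := integral_nonneg fun _ => abs_nonneg _
    have hK0 : 0 ≤ K := by positivity
    -- an affine minorant of `put ν - put μ` with the slope of that function at `+∞`
    have hmin : (fun t => -K + (ν.real univ - μ.real univ) * (t - 0)) ≤ put ν - put μ := by
      intro t
      rcases le_total 0 t with ht | ht
      · have h1 := hν.le_put t
        have h2 := hμ.put_le ht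
        simp only [Pi.sub_apply]
        linarith [le_abs_self (∫ s, s ∂ν)]
      · refine le_trans ?_ (hzD t)
        simp only
        nlinarith
    have hc := le_convexEnvelope (convexOn_affine _ _ _) hmin
    refine le_of_mul_le_mul_add (K := K + ∫ s, |s| ∂ν + ∫ s, s ∂θ) fun t ht => ?_
    have h1 := hθ.le_put t
    have h2 := hν.put_le ht
    have h3 := hc t
    have h4 := congrFun hput t
    simp only [Pi.sub_apply] at h3 h4
    linarith

/-- Lemma 5.2, existence and uniqueness of the shadow. If
`μ ≤_pcd ν`, the set of measures `θ` with `μ ≤_cd θ ≤ ν` is nonempty and contains a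
unique least element for the convex-decreasing order. -/
theorem shadow_exists_unique
    (μ ν : Measure ℝ) (hμ : FiniteFirstMoment μ) (hν : FiniteFirstMoment ν)
    (h : PCDOrder μ ν) :
    ∃! θs : Measure ℝ,
      (FiniteFirstMoment θs ∧ CDOrder μ θs ∧ θs ≤ ν) ∧
      ∀ θ : Measure ℝ, FiniteFirstMoment θ → CDOrder μ θ → θ ≤ ν → CDOrder θs θ := by
  obtain ⟨θs, hle, hput⟩ := exists_put_eq_sub_convexEnvelope hμ hν h.put_le
  have hθs := hν.of_le hle
  have hmass := mass_eq_of_put_eq hμ hν hθs h.put_le h.measureReal_univ_le hput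
  have hμθs : CDOrder μ θs := by
    refine cdOrder_of_put_le hμ hθs hmass fun t => ?_
    have := convexEnvelope_le (D := put ν - put μ) (convexOn_const (0 : ℝ) convex_univ)
      (fun t => sub_nonneg.2 (h.put_le t)) t
    have h4 := congrFun hput t
    simp only [Pi.sub_apply] at this h4
    linarith
  have hmin : ∀ θ : Measure ℝ, FiniteFirstMoment θ → CDOrder μ θ → θ ≤ ν → CDOrder θs θ := by
    intro θ hθ hμθ hθν
    refine cdOrder_of_put_le hθs hθ (hmass.symm.trans hμθ.measureReal_univ) fun t => ?_
    -- `put ν - put θ` is a convex minorant of `put ν - put μ`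
    have := le_convexEnvelope (convexOn_put_sub_put hν hθν)
      (sub_le_sub_left hμθ.pcdOrder.put_le (put ν)) t
    have h4 := congrFun hput t
    simp only [Pi.sub_apply] at this h4
    linarith
  refine ⟨θs, ⟨⟨hθs, hμθs, hle⟩, hmin⟩, ?_⟩
  rintro θ' ⟨⟨hθ', hμθ', hle'⟩, hmin'⟩
  exact CDOrder.antisymm hθ' hθs (hmin' θs hθs hμθs hle) (hmin θ' hθ' hμθ' hle')
end
end

section
/- Let μ ≤_cd ν be finite Borel measures on ℝ with finite first moments and let a ∈ ℝ. If ν is concentrated on [a,∞), then μ is concentrated on [a,∞) and ν({a}) ≥ μ({a}). If moreover μ ≤_c ν (convex order) and ν is concentrated on (−∞,a], then μ is concentrated on (−∞,a] and ν({a}) ≥ μ({a}). -/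
/-!
Both halves follow from testing the order against the hinge functions `x ↦ (b + k c (a - x))⁺`
with `b, k ≥ 0`, where `c = 1` handles a left endpoint (the hinges are then nonincreasing) and
`c = -1` a right endpoint.

The hinge `(c (a - x))⁺` integrates to zero against `ν`, hence against `μ`, so `μ` does not charge
the forbidden side of `a`. The hinges `(1 + n c (a - x))⁺` dominate the indicator of `{a}` and, on
the side of `a` carrying `ν`, are bounded by `1` and converge pointwise to that indicator as
`n → ∞`; dominated convergence gives `μ {a} ≤ ν {a}`. The lemma `concentrated_of_hinge_le` carries
this argument for both values of `c` at once.
-/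

open MeasureTheory Set
open scoped ENNReal

noncomputable section

/-- The hinge function `x ↦ (b + k c (a - x))⁺`. -/
def hinge (a c b k : ℝ) (x : ℝ) : ℝ := max (b + k * (c * (a - x))) 0

lemma hinge_convexOn (a c b k : ℝ) : ConvexOn ℝ Set.univ (hinge a c b k) := by
  have h1 : ConvexOn ℝ Set.univ (fun x : ℝ => b + k * (c * (a - x))) := by
    refine ⟨convex_univ, fun x _ y _ s t _ _ hst => le_of_eq ?_⟩
    simp only [smul_eq_mul]
    linear_combination (-(b + k * c * a)) * hst
  exact h1.sup (convexOn_const 0 convex_univ)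

lemma hinge_linearGrowth (a c b k : ℝ) : LinearGrowth (hinge a c b k) := by
  refine ⟨|b| + |k * c| * |a| + |k * c|, fun x => ?_⟩
  have h1 : |hinge a c b k x| ≤ |b + k * (c * (a - x))| := by
    unfold hinge
    rw [abs_of_nonneg (le_max_right _ _)]
    exact max_le (le_abs_self _) (abs_nonneg _)
  have h2 : |b + k * (c * (a - x))| ≤ |b| + |k * c| * (|a| + |x|) := by
    calc |b + k * (c * (a - x))| ≤ |b| + |k * (c * (a - x))| := abs_add_le _ _
      _ = |b| + |k * c| * |a - x| := by rw [← mul_assoc, abs_mul]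
      _ ≤ _ := by gcongr; exact abs_sub a x
  nlinarith [abs_nonneg x, abs_nonneg b, abs_nonneg a, abs_nonneg (k * c),
    mul_nonneg (abs_nonneg b) (abs_nonneg x),
    mul_nonneg (mul_nonneg (abs_nonneg (k * c)) (abs_nonneg a)) (abs_nonneg x)]

lemma hinge_integrable {μ : Measure ℝ} (hμ : FiniteFirstMoment μ) (a c b k : ℝ) :
    Integrable (hinge a c b k) μ := by
  obtain ⟨_, hi⟩ := hμ
  exact ((integrable_const b).add ((((integrable_const a).sub hi).const_mul c).const_mul k)).pos_part

lemma hinge_antitone (a b k : ℝ) (hk : 0 ≤ k) : Antitone (hinge a 1 b k) := by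
  intro x y hxy
  unfold hinge
  gcongr

/-- If integrals of hinges with `b, k ≥ 0` increase from `μ` to `ν` and `ν` does not charge the
side `0 < c (a - x)` of `a`, then neither does `μ`, and the atom at `a` can only grow. -/
lemma concentrated_of_hinge_le {μ ν : Measure ℝ} (hμ : FiniteFirstMoment μ)
    (hν : FiniteFirstMoment ν) (a c : ℝ) (hc : c ≠ 0)
    (h : ∀ b k : ℝ, 0 ≤ b → 0 ≤ k → ∫ x, hinge a c b k x ∂μ ≤ ∫ x, hinge a c b k x ∂ν)
    (h0 : ν {x | 0 < c * (a - x)} = 0) :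
    μ {x | 0 < c * (a - x)} = 0 ∧ μ {a} ≤ ν {a} := by
  have hae : ∀ᵐ x ∂ν, c * (a - x) ≤ 0 := by
    rw [ae_iff]
    simpa using h0
  have _ := hμ.1
  have _ := hν.1
  constructor
  · have hν0 : ∫ x, hinge a c 0 1 x ∂ν = 0 := by
      refine integral_eq_zero_of_ae ?_
      filter_upwards [hae] with x hx
      simp [hinge, hx]
    have hnn : 0 ≤ hinge a c 0 1 := fun x => le_max_right _ _
    have hμ0 : ∫ x, hinge a c 0 1 x ∂μ = 0 :=
      le_antisymm ((h 0 1 le_rfl zero_le_one).trans hν0.le) (integral_nonneg hnn)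
    rw [integral_eq_zero_iff_of_nonneg hnn (hinge_integrable hμ a c 0 1)] at hμ0
    have h1 : ∀ᵐ x ∂μ, c * (a - x) ≤ 0 := by
      filter_upwards [hμ0] with x hx
      simpa [hinge] using hx
    rw [ae_iff] at h1
    simpa using h1
  · have hind : ∀ ρ : Measure ℝ, ∫ x, ({a} : Set ℝ).indicator (fun _ => (1 : ℝ)) x ∂ρ
        = ρ.real {a} := fun ρ => by
      rw [integral_indicator (measurableSet_singleton a)]
      simp [Measure.real]
    have hlow : ∀ n : ℕ, μ.real {a} ≤ ∫ x, hinge a c 1 n x ∂ν := fun n => by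
      refine le_trans ?_ (h 1 n zero_le_one (Nat.cast_nonneg n))
      rw [← hind μ]
      refine integral_mono ((integrable_const 1).indicator (measurableSet_singleton a))
        (hinge_integrable hμ a c 1 n) fun x => ?_
      by_cases hx : x = a
      · simp [hx, hinge]
      · simp [hx, hinge]
    have hlim : Filter.Tendsto (fun n : ℕ => ∫ x, hinge a c 1 n x ∂ν) Filter.atTop
        (nhds (∫ x, ({a} : Set ℝ).indicator (fun _ => (1 : ℝ)) x ∂ν)) := by
      refine tendsto_integral_of_dominated_convergence (fun _ => 1)
        (fun n => (hinge_integrable hν a c 1 n).1) (integrable_const 1) (fun n => ?_) ?_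
      · filter_upwards [hae] with x hx
        have : (n : ℝ) * (c * (a - x)) ≤ 0 := mul_nonpos_of_nonneg_of_nonpos n.cast_nonneg hx
        rw [hinge, Real.norm_of_nonneg (le_max_right _ _)]
        exact max_le (by linarith) zero_le_one
      · filter_upwards [hae] with x hx
        by_cases hxa : x = a
        · simp [hxa, hinge]
        · have hneg : c * (a - x) < 0 :=
            lt_of_le_of_ne hx (mul_ne_zero hc (sub_ne_zero.2 (Ne.symm hxa)))
          -- The hinge vanishes at `x` as soon as `n ≥ 1 / |c (a - x)|`.
          obtain ⟨N, hN⟩ := exists_nat_ge (1 / (-(c * (a - x))))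
          rw [div_le_iff₀ (by linarith)] at hN
          refine tendsto_const_nhds.congr' ?_
          filter_upwards [Filter.eventually_ge_atTop N] with n hn
          have hn' : (N : ℝ) ≤ n := by exact_mod_cast hn
          have : 1 + (n : ℝ) * (c * (a - x)) ≤ 0 := by nlinarith
          simp [hinge, hxa, this]
    rw [hind ν] at hlim
    have hreal : μ.real {a} ≤ ν.real {a} := ge_of_tendsto' hlim hlow
    exact (ENNReal.toReal_le_toReal (measure_ne_top μ _) (measure_ne_top ν _)).1 hreal

/-- Lemma 6.2. If `μ ≤_cd ν` and `ν` is concentrated on `[a,∞)`, then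
so is `μ` and `ν({a}) ≥ μ({a})`; if moreover `μ ≤_c ν` and `ν` is concentrated on
`(-∞,a]`, then so is `μ` and `ν({a}) ≥ μ({a})`. -/
theorem supports_ordered
    (μ ν : Measure ℝ) (hμ : FiniteFirstMoment μ) (hν : FiniteFirstMoment ν)
    (h : CDOrder μ ν) (a : ℝ) :
    (ν (Set.Iio a) = 0 → μ (Set.Iio a) = 0 ∧ μ {a} ≤ ν {a}) ∧
    (COrder μ ν → ν (Set.Ioi a) = 0 → μ (Set.Ioi a) = 0 ∧ μ {a} ≤ ν {a}) := by
  constructor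
  · intro h0
    have hset : {x : ℝ | 0 < (1 : ℝ) * (a - x)} = Set.Iio a := by ext x; simp
    have := concentrated_of_hinge_le hμ hν a 1 one_ne_zero
      (fun b k _ hk => h _ (hinge_convexOn _ _ _ _) (hinge_antitone a b k hk)
        (hinge_linearGrowth _ _ _ _))
    rw [hset] at this
    exact this h0
  · intro hcx h0
    have hset : {x : ℝ | 0 < (-1 : ℝ) * (a - x)} = Set.Ioi a := by ext x; simp
    have := concentrated_of_hinge_le hμ hν a (-1) (by norm_num)
      (fun b k _ _ => hcx _ (hinge_convexOn _ _ _ _) (hinge_linearGrowth _ _ _ _))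
    rw [hset] at this
    exact this h0
end
end
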